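/- Suppose each f_i is μ_i-convex for some μ_i ∈ ℝ and set μ = min_{i=1,…,m} μ_i. If μ ≥ 0, then u₀(x) ≤ w_μ(x) and u_ℓ(x) ≤ w_{μ+ℓ}(x) for every ℓ > 0 and every x ∈ S (in the extended reals when μ = 0 or for u₀). If μ < 0, then u_{−μ+ℓ}(x) ≤ w_ℓ(x) for every ℓ > 0 and every x ∈ S. -/

import Mathlib

open scoped RealInnerProductSpace

/-- `σ`-convexity: `h(αa + (1-α)b) ≤ αh(a) + (1-α)h(b) - (α(1-α)σ/2)‖a - b‖²`. -/
def SigmaConvex {n : ℕ} (σ : ℝ) (h : EuclideanSpace ℝ (Fin n) → ℝ) : Prop :=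
  ∀ a b : EuclideanSpace ℝ (Fin n), ∀ α ∈ Set.Icc (0 : ℝ) 1,
    h (α • a + (1 - α) • b) ≤
      α * h a + (1 - α) * h b - α * (1 - α) * σ / 2 * ‖a - b‖ ^ 2

/-- The simple merit function `u₀(x) = sup_{y ∈ S} min_i (F i x - F i y)` (extended reals). -/
noncomputable def meritU0 {n m : ℕ} (S : Set (EuclideanSpace ℝ (Fin n)))
    (F : Fin m → EuclideanSpace ℝ (Fin n) → ℝ)
    (x : EuclideanSpace ℝ (Fin n)) : EReal :=
  ⨆ y ∈ S, (((⨅ i, (F i x - F i y)) : ℝ) : EReal)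

/-- The regularized merit function
`u_ℓ(x) = max_{y ∈ S} min_i (F i x - F i y - (ℓ/2)‖x - y‖²)`. -/
noncomputable def meritU {n m : ℕ} (ℓ : ℝ) (S : Set (EuclideanSpace ℝ (Fin n)))
    (F : Fin m → EuclideanSpace ℝ (Fin n) → ℝ)
    (x : EuclideanSpace ℝ (Fin n)) : ℝ :=
  sSup ((fun y => ⨅ i, (F i x - F i y - ℓ / 2 * ‖x - y‖ ^ 2)) '' S)

/-- The regularized and partially linearized merit function
`w_ℓ(x) = max_{y ∈ S} min_i (⟨∇f_i(x), x - y⟩ + g_i(x) - g_i(y) - (ℓ/2)‖x - y‖²)`. -/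
noncomputable def meritW {n m : ℕ} (ℓ : ℝ) (S : Set (EuclideanSpace ℝ (Fin n)))
    (Gf : Fin m → EuclideanSpace ℝ (Fin n) → EuclideanSpace ℝ (Fin n))
    (g : Fin m → EuclideanSpace ℝ (Fin n) → ℝ)
    (x : EuclideanSpace ℝ (Fin n)) : ℝ :=
  sSup ((fun y => ⨅ i, (⟪Gf i x, x - y⟫ + g i x - g i y - ℓ / 2 * ‖x - y‖ ^ 2)) '' S)

/-- The extended-real version of `w_ℓ` (`w_ℓ(x) = sup_{y ∈ S} ...`, needed for `ℓ ≥ 0`). -/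
noncomputable def meritWE {n m : ℕ} (ℓ : ℝ) (S : Set (EuclideanSpace ℝ (Fin n)))
    (Gf : Fin m → EuclideanSpace ℝ (Fin n) → EuclideanSpace ℝ (Fin n))
    (g : Fin m → EuclideanSpace ℝ (Fin n) → ℝ)
    (x : EuclideanSpace ℝ (Fin n)) : EReal :=
  ⨆ y ∈ S,
    (((⨅ i, (⟪Gf i x, x - y⟫ + g i x - g i y - ℓ / 2 * ‖x - y‖ ^ 2)) : ℝ) : EReal)

/-! Along the segment from `x` to `y`, `σ`-convexity of `f` bounds `f x - f y` by its linearization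
minus `σ / 2 * ‖x - y‖ ^ 2`, so the expression under the supremum in `u_ℓ` is pointwise at most the
one in `w_{μ+ℓ}`, whatever the sign of `μ`. To pass to real suprema, the latter must be
bounded above: a convex function has a continuous affine minorant, which the quadratic term
dominates as soon as `μ + ℓ > 0`. -/

open Set

theorem mul_sub_half_mul_sq_le {b : ℝ} (hb : 0 < b) (c t : ℝ) :
    c * t - b / 2 * t ^ 2 ≤ c ^ 2 / (2 * b) := by
  rw [le_div_iff₀ (by positivity)]
  linarith [sq_nonneg (c - b * t)]

section NormedSpace

variable {E : Type*} [NormedAddCommGroup E] [NormedSpace ℝ E]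

theorem add_apply_sub_add_le_of_uniformConvexOn {s : Set E} {φ : ℝ → ℝ} {f : E → ℝ}
    {f' : E →L[ℝ] ℝ} {x y : E} (hf : UniformConvexOn s φ f) (hx : x ∈ s) (hy : y ∈ s)
    (hf' : HasFDerivWithinAt f f' s x) :
    f x + f' (y - x) + φ ‖y - x‖ ≤ f y := by
  -- The gap in the uniform convexity inequality is minimal at `t = 0`, where it vanishes.
  let gap : ℝ → ℝ := fun t =>
    t * f y + (1 - t) * f x - t * (1 - t) * φ ‖y - x‖ - f (AffineMap.lineMap x y t)
  have gap_zero : gap 0 = 0 := by simp [gap]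
  have gap_nonneg : ∀ t ∈ Icc (0 : ℝ) 1, 0 ≤ gap t := fun t ht => by
    have := hf.2 hy hx ht.1 (sub_nonneg.2 ht.2) (add_sub_cancel t 1)
    rw [add_comm (t • y), ← AffineMap.lineMap_apply_module] at this
    simpa only [gap, sub_nonneg, smul_eq_mul] using this
  have gap_min : IsLocalMinOn gap (Icc 0 1) 0 :=
    IsMinOn.localize fun t ht => gap_zero.trans_le (gap_nonneg t ht)
  have line_deriv : HasDerivWithinAt (fun t : ℝ => f (AffineMap.lineMap x y t)) (f' (y - x))
      (Icc 0 1) 0 :=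
    HasFDerivWithinAt.comp_hasDerivWithinAt (t := s) 0 (by simpa using hf')
      AffineMap.hasDerivWithinAt_lineMap fun t ht => hf.1.lineMap_mem hx hy ht
  have gap_deriv : HasDerivWithinAt gap (f y - f x - φ ‖y - x‖ - f' (y - x)) (Icc 0 1) 0 := by
    have hid := hasDerivWithinAt_id (0 : ℝ) (Icc 0 1)
    have hsub := hid.const_sub 1
    refine ((((hid.mul_const (f y)).add (hsub.mul_const (f x))).sub
      ((hid.mul hsub).mul_const (φ ‖y - x‖))).sub line_deriv).congr_deriv ?_
    simp only [id_eq]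
    ring
  have one_mem : (1 : ℝ) ∈ posTangentConeAt (Icc (0 : ℝ) 1) 0 :=
    mem_posTangentConeAt_of_segment_subset (by simp [segment_eq_Icc])
  have := gap_min.hasFDerivWithinAt_nonneg gap_deriv.hasFDerivWithinAt one_mem
  simp only [ContinuousLinearMap.toSpanSingleton_apply, one_smul] at this
  linarith

theorem bddBelow_range_add_norm_sub_sq {h : E → ℝ} (hconv : ConvexOn ℝ univ h)
    (hlsc : LowerSemicontinuous h) {b : ℝ} (hb : 0 < b) (x : E) :
    BddBelow (range fun y => h y + b / 2 * ‖x - y‖ ^ 2) := by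
  obtain ⟨l, c, hle, hlx⟩ : ∃ (l : E →L[ℝ] ℝ) (c : ℝ),
      (∀ y, l y + c ≤ h y) ∧ l x + c = h x - 1 := by
    obtain ⟨l, c, hle, hlx⟩ := ConvexOn.exists_affine_le_of_lt (𝕜 := ℝ) (mem_univ x)
      (sub_one_lt (h x)) isClosed_univ (lowerSemicontinuousOn_univ_iff.2 hlsc) hconv
    exact ⟨l, c, fun y => hle ⟨y, mem_univ y⟩, hlx⟩
  refine ⟨h x - 1 - ‖l‖ ^ 2 / (2 * b), forall_mem_range.2 fun y => ?_⟩
  have l_sub_le : l x - l y ≤ ‖l‖ * ‖x - y‖ := by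
    rw [← map_sub]
    exact (le_abs_self _).trans (l.le_opNorm _)
  linarith [hle y, mul_sub_half_mul_sq_le hb ‖l‖ ‖x - y‖]

end NormedSpace

section InnerProductSpace

variable {E : Type*} [NormedAddCommGroup E] [InnerProductSpace ℝ E]

theorem bddAbove_range_inner_add_sub_sub_norm_sq {g : E → ℝ} (hconv : ConvexOn ℝ univ g)
    (hlsc : LowerSemicontinuous g) {b : ℝ} (hb : 0 < b) (v x : E) :
    BddAbove (range fun y => ⟪v, x - y⟫ + g x - g y - b / 2 * ‖x - y‖ ^ 2) := by
  have hconv_add : ConvexOn ℝ univ fun y => g y + ⟪v, y⟫ :=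
    hconv.add ((innerSL ℝ v).toLinearMap.convexOn convex_univ)
  have hlsc_add : LowerSemicontinuous fun y => g y + ⟪v, y⟫ :=
    hlsc.add (innerSL ℝ v).continuous.lowerSemicontinuous
  obtain ⟨B, hB⟩ := bddBelow_range_add_norm_sub_sq hconv_add hlsc_add hb x
  refine ⟨⟪v, x⟫ + g x - B, forall_mem_range.2 fun y => ?_⟩
  have hBy : B ≤ g y + ⟪v, y⟫ + b / 2 * ‖x - y‖ ^ 2 := hB (mem_range_self y)
  rw [inner_sub_right]
  linarith

variable [CompleteSpace E]

theorem sub_le_inner_sub_of_strongConvexOn {s : Set E} {f : E → ℝ} {σ : ℝ} {v x y : E}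
    (hf : StrongConvexOn s σ f) (hx : x ∈ s) (hy : y ∈ s) (hv : HasGradientWithinAt f v s x) :
    f x - f y ≤ ⟪v, x - y⟫ - σ / 2 * ‖x - y‖ ^ 2 := by
  have h := add_apply_sub_add_le_of_uniformConvexOn hf hx hy hv.hasFDerivWithinAt
  rw [InnerProductSpace.toDual_apply_apply, ← neg_sub x y, inner_neg_right, norm_neg] at h
  linarith

theorem iInf_sub_le_iInf_inner_sub {ι : Type*} [Finite ι] {f g : ι → E → ℝ} {v : ι → E} {x : E}
    {σ : ℝ} (hf : ∀ i, StrongConvexOn univ σ (f i)) (hv : ∀ i, HasGradientAt (f i) (v i) x)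
    (ℓ : ℝ) (y : E) :
    ⨅ i, (f i x + g i x - (f i y + g i y) - ℓ / 2 * ‖x - y‖ ^ 2) ≤
      ⨅ i, (⟪v i, x - y⟫ + g i x - g i y - (σ + ℓ) / 2 * ‖x - y‖ ^ 2) :=
  ciInf_mono (finite_range _).bddBelow fun i => by
    linarith [sub_le_inner_sub_of_strongConvexOn (hf i) (mem_univ x) (mem_univ y)
      (hasGradientWithinAt_univ.2 (hv i))]

end InnerProductSpace

section Merit

variable {n m : ℕ}

theorem sigmaConvex_iff_strongConvexOn {σ : ℝ} {h : EuclideanSpace ℝ (Fin n) → ℝ} :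
    SigmaConvex σ h ↔ StrongConvexOn univ σ h := by
  constructor
  · refine fun hh => ⟨convex_univ, fun x _ y _ a b ha hb hab => ?_⟩
    obtain rfl : b = 1 - a := eq_sub_of_add_eq' hab
    refine (hh x y a ⟨ha, sub_nonneg.1 hb⟩).trans_eq ?_
    simp only [smul_eq_mul]
    ring
  · refine fun hh a b α hα => (hh.2 (mem_univ a) (mem_univ b) hα.1 (sub_nonneg.2 hα.2)
      (add_sub_cancel α 1)).trans_eq ?_
    simp only [smul_eq_mul]
    ring

variable {S : Set (EuclideanSpace ℝ (Fin n))} {f g : Fin m → EuclideanSpace ℝ (Fin n) → ℝ}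
  {Gf : Fin m → EuclideanSpace ℝ (Fin n) → EuclideanSpace ℝ (Fin n)}
  {x : EuclideanSpace ℝ (Fin n)} {σ ℓ : ℝ}

theorem meritU0_le_meritWE (hf : ∀ i, StrongConvexOn univ σ (f i))
    (hGf : ∀ i, HasGradientAt (f i) (Gf i x) x) :
    meritU0 S (fun i y => f i y + g i y) x ≤ meritWE σ S Gf g x :=
  iSup₂_mono fun y _ => EReal.coe_le_coe_iff.2 <| by
    simpa using iInf_sub_le_iInf_inner_sub (g := g) hf hGf 0 y

theorem bddAbove_meritW {j : Fin m} (hg : ConvexOn ℝ univ (g j)) (hℓ : 0 < ℓ) :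
    BddAbove ((fun y => ⨅ i, (⟪Gf i x, x - y⟫ + g i x - g i y - ℓ / 2 * ‖x - y‖ ^ 2)) '' S) := by
  have hlsc : LowerSemicontinuous (g j) := hg.locallyLipschitz.continuous.lowerSemicontinuous
  obtain ⟨B, hB⟩ := bddAbove_range_inner_add_sub_sub_norm_sq hg hlsc hℓ (Gf j x) x
  refine ⟨B, forall_mem_image.2 fun y _ => ?_⟩
  exact (ciInf_le (finite_range _).bddBelow j).trans (hB (mem_range_self y))

theorem meritU_le_meritW_add (hS : S.Nonempty) (hf : ∀ i, StrongConvexOn univ σ (f i))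
    (hGf : ∀ i, HasGradientAt (f i) (Gf i x) x) {j : Fin m} (hg : ConvexOn ℝ univ (g j))
    (hℓ : 0 < σ + ℓ) :
    meritU ℓ S (fun i y => f i y + g i y) x ≤ meritW (σ + ℓ) S Gf g x :=
  csSup_le (hS.image _) <| forall_mem_image.2 fun y hy =>
    (iInf_sub_le_iInf_inner_sub hf hGf ℓ y).trans <|
      le_csSup (bddAbove_meritW hg hℓ) (mem_image_of_mem _ hy)

end Merit

theorem merit_comparison_mu_convex_general {n m : ℕ}
    {S : Set (EuclideanSpace ℝ (Fin n))} (hS : S.Nonempty)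
    {f g : Fin m → EuclideanSpace ℝ (Fin n) → ℝ}
    {Gf : Fin m → EuclideanSpace ℝ (Fin n) → EuclideanSpace ℝ (Fin n)}
    (hGf : ∀ i y, HasGradientAt (f i) (Gf i y) y) (hgconv : ∃ j, ConvexOn ℝ univ (g j))
    {μv : Fin m → ℝ} (hμ : ∀ i, SigmaConvex (μv i) (f i)) :
    (∀ x, meritU0 S (fun i y => f i y + g i y) x ≤ meritWE (⨅ i, μv i) S Gf g x) ∧
    ∀ ℓ : ℝ, 0 < (⨅ i, μv i) + ℓ → ∀ x,
      meritU ℓ S (fun i y => f i y + g i y) x ≤ meritW ((⨅ i, μv i) + ℓ) S Gf g x := by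
  obtain ⟨j, hgj⟩ := hgconv
  have hf : ∀ i, StrongConvexOn univ (⨅ i, μv i) (f i) := fun i =>
    (sigmaConvex_iff_strongConvexOn.1 (hμ i)).mono (ciInf_le (finite_range μv).bddBelow i)
  exact ⟨fun x => meritU0_le_meritWE hf fun i => hGf i x,
    fun ℓ hℓ x => meritU_le_meritW_add hS hf (fun i => hGf i x) hgj hℓ⟩

/-- if each `f_i` is `μ_i`-convex and `μ = min_i μ_i`, then for `μ ≥ 0` one
has `u₀ ≤ w_μ` and `u_ℓ ≤ w_{μ+ℓ}` on `S` for every `ℓ > 0`, while for `μ < 0` one has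
`u_{-μ+ℓ} ≤ w_ℓ` on `S` for every `ℓ > 0`. -/
theorem merit_comparison_mu_convex {n m : ℕ} (hm : 0 < m)
    (S : Set (EuclideanSpace ℝ (Fin n))) (hS : S.Nonempty)
    (hSclosed : IsClosed S) (hSconv : Convex ℝ S)
    (f g : Fin m → EuclideanSpace ℝ (Fin n) → ℝ)
    (Gf : Fin m → EuclideanSpace ℝ (Fin n) → EuclideanSpace ℝ (Fin n))
    (hGf : ∀ i y, HasGradientAt (f i) (Gf i y) y)
    (hGfc : ∀ i, Continuous (Gf i))
    (hgconv : ∀ i, ConvexOn ℝ Set.univ (g i))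
    (μv : Fin m → ℝ) (hμ : ∀ i, SigmaConvex (μv i) (f i)) :
    ((0 ≤ ⨅ i, μv i) →
      (∀ x ∈ S, meritU0 S (fun i y => f i y + g i y) x ≤ meritWE (⨅ i, μv i) S Gf g x) ∧
      (∀ ℓ : ℝ, 0 < ℓ → ∀ x ∈ S,
        meritU ℓ S (fun i y => f i y + g i y) x ≤ meritW ((⨅ i, μv i) + ℓ) S Gf g x)) ∧
    ((⨅ i, μv i) < 0 →
      ∀ ℓ : ℝ, 0 < ℓ → ∀ x ∈ S,
        meritU (-(⨅ i, μv i) + ℓ) S (fun i y => f i y + g i y) x ≤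
          meritW ℓ S Gf g x) := by
  obtain ⟨hU0, hU⟩ := merit_comparison_mu_convex_general hS hGf ⟨⟨0, hm⟩, hgconv _⟩ hμ
  exact ⟨fun hμ0 => ⟨fun x _ => hU0 x, fun ℓ hℓ x _ => hU ℓ (by linarith) x⟩,
    fun _ ℓ hℓ x _ => by simpa using hU (-(⨅ i, μv i) + ℓ) (by simpa using hℓ) x⟩
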